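/- Let n, m ≥ 1. In the real Lie algebra 𝔰𝔬(2n+2m) of skew-symmetric (2n+2m)×(2n+2m) real matrices with the commutator bracket ⁅A,B⁆ = AB − BA, let J_{2m} ∈ M_{2m}(ℝ) be the block-diagonal matrix consisting of m copies of the 2×2 block [[0,1],[−1,0]], and let T be the block-diagonal matrix diag(0_{2n}, J_{2m}) ∈ 𝔰𝔬(2n+2m). For M ∈ M_{2n×2m}(ℝ) let X(M) ∈ 𝔰𝔬(2n+2m) be the block matrix with zero diagonal blocks, upper-right block M and lower-left block −Mᵀ. Then for every M: ⁅T, X(M)⁆ = X(−M·J_{2m}), hence ⁅T, ⁅T, X(M)⁆⁆ = −X(M); in particular ⁅T, X(M)⁆ = 0 implies M = 0. -/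

import Mathlib

open Matrix
/-- The `2k × 2k` block-diagonal matrix consisting of `k` copies of the
`2 × 2` block `[[0, 1], [-1, 0]]`. -/
def Jmat (k : ℕ) : Matrix (Fin (2 * k)) (Fin (2 * k)) ℝ :=
  Matrix.of fun i j =>
    if (i : ℕ) + 1 = (j : ℕ) ∧ (i : ℕ) % 2 = 0 then 1
    else if (j : ℕ) + 1 = (i : ℕ) ∧ (j : ℕ) % 2 = 0 then -1
    else 0

/-- The skew-symmetric matrix `X(M)` with zero diagonal blocks and upper-right block `M`. Such
matrices form the complement `𝔪` of the block-diagonal subalgebra, on which that subalgebra acts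
by the bracket. -/
def skewOffDiag {p q R : Type*} [AddGroup R] (M : Matrix p q R) :
    Matrix (p ⊕ q) (p ⊕ q) R :=
  fromBlocks 0 M (-Mᵀ) 0

section SkewOffDiag

variable {p q R : Type*}

theorem skewOffDiag_neg [AddGroup R] (M : Matrix p q R) : skewOffDiag (-M) = -skewOffDiag M := by
  simp only [skewOffDiag, fromBlocks_neg, transpose_neg, neg_zero]

theorem skewOffDiag_eq_zero_iff [AddGroup R] {M : Matrix p q R} : skewOffDiag M = 0 ↔ M = 0 := by
  simp [skewOffDiag, ← fromBlocks_zero, fromBlocks_inj]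

variable [Fintype p] [Fintype q] [CommRing R]

theorem lie_fromBlocks_skewOffDiag {A : Matrix p p R} {D : Matrix q q R}
    (hA : Aᵀ = -A) (hD : Dᵀ = -D) (M : Matrix p q R) :
    ⁅fromBlocks A 0 0 D, skewOffDiag M⁆ = skewOffDiag (A * M - M * D) := by
  have lower_left : D * -Mᵀ + -(-Mᵀ * A) = -(A * M - M * D)ᵀ := by
    rw [transpose_sub, transpose_mul, transpose_mul, hA, hD]
    simp only [Matrix.mul_neg, Matrix.neg_mul]
    abel
  rw [skewOffDiag, skewOffDiag, ← lower_left, Ring.lie_def, sub_eq_add_neg, sub_eq_add_neg]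
  simp only [fromBlocks_multiply, fromBlocks_neg, fromBlocks_add, Matrix.zero_mul, Matrix.mul_zero,
    add_zero, zero_add, neg_zero]

theorem lie_fromBlocks_zero_skewOffDiag {J : Matrix q q R} (hJ : Jᵀ = -J) (M : Matrix p q R) :
    ⁅fromBlocks (0 : Matrix p p R) 0 0 J, skewOffDiag M⁆ = skewOffDiag (-(M * J)) := by
  simpa using lie_fromBlocks_skewOffDiag (A := 0) (by simp) hJ M

theorem lie_lie_fromBlocks_zero_skewOffDiag [DecidableEq q] {J : Matrix q q R} (hJ : Jᵀ = -J)
    (hJJ : J * J = -1) (M : Matrix p q R) :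
    ⁅fromBlocks (0 : Matrix p p R) 0 0 J, ⁅fromBlocks (0 : Matrix p p R) 0 0 J, skewOffDiag M⁆⁆ =
      -skewOffDiag M := by
  calc
    ⁅fromBlocks (0 : Matrix p p R) 0 0 J, ⁅fromBlocks (0 : Matrix p p R) 0 0 J, skewOffDiag M⁆⁆
    _ = skewOffDiag (-(-(M * J) * J)) := by simp only [lie_fromBlocks_zero_skewOffDiag hJ]
    _ = skewOffDiag (M * (J * J)) := by rw [Matrix.neg_mul, neg_neg, Matrix.mul_assoc]
    _ = -skewOffDiag M := by rw [hJJ, Matrix.mul_neg, Matrix.mul_one, skewOffDiag_neg]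

theorem stmt10_general [DecidableEq q] {J : Matrix q q R} (hJ : Jᵀ = -J) (hJJ : J * J = -1)
    (M : Matrix p q R) :
    ⁅fromBlocks (0 : Matrix p p R) 0 0 J, skewOffDiag M⁆ = skewOffDiag (-(M * J)) ∧
    ⁅fromBlocks (0 : Matrix p p R) 0 0 J, ⁅fromBlocks (0 : Matrix p p R) 0 0 J, skewOffDiag M⁆⁆ =
      -skewOffDiag M ∧
    (⁅fromBlocks (0 : Matrix p p R) 0 0 J, skewOffDiag M⁆ = 0 → M = 0) := by
  have lie_lie := lie_lie_fromBlocks_zero_skewOffDiag hJ hJJ M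
  refine ⟨lie_fromBlocks_zero_skewOffDiag hJ M, lie_lie, fun h => skewOffDiag_eq_zero_iff.mp ?_⟩
  rw [← neg_eq_zero, ← lie_lie, h, Ring.lie_def, mul_zero, zero_mul, sub_zero]

end SkewOffDiag

/-- The indexing of `k` consecutive blocks of size two: entry `i` of block `a` has position
`i + 2 * a`. The pairs are ordered as in `Matrix.blockDiagonal`, block index last. -/
def twoBlockEquiv (k : ℕ) : Fin 2 × Fin k ≃ Fin (2 * k) :=
  (Equiv.prodComm _ _).trans (finProdFinEquiv.trans (finCongr (Nat.mul_comm k 2)))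

theorem twoBlockEquiv_val {k : ℕ} (i : Fin 2) (a : Fin k) :
    (twoBlockEquiv k (i, a) : ℕ) = i + 2 * a :=
  rfl

theorem Jmat_twoBlockEquiv_apply {k : ℕ} (i j : Fin 2) (a b : Fin k) :
    Jmat k (twoBlockEquiv k (i, a)) (twoBlockEquiv k (j, b)) =
      if a = b then !![0, 1; -1, 0] i j else 0 := by
  revert i j
  simp only [Fin.forall_fin_two, Jmat, of_apply, twoBlockEquiv_val, cons_val, Fin.val_zero,
    Fin.val_one, Fin.ext_iff]
  grind

theorem Jmat_eq_reindex_blockDiagonal (k : ℕ) :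
    Jmat k = reindex (twoBlockEquiv k) (twoBlockEquiv k)
      (blockDiagonal fun _ => !![0, 1; -1, 0]) := by
  rw [← Equiv.symm_apply_eq]
  ext ⟨i, a⟩ ⟨j, b⟩
  exact Jmat_twoBlockEquiv_apply i j a b

theorem Jmat_transpose (k : ℕ) : (Jmat k)ᵀ = -Jmat k := by
  have transpose_block : (!![0, 1; -1, 0] : Matrix (Fin 2) (Fin 2) ℝ)ᵀ = -!![0, 1; -1, 0] := by
    simp [← Matrix.ext_iff, Fin.forall_fin_two]
  rw [Jmat_eq_reindex_blockDiagonal, transpose_reindex, blockDiagonal_transpose, transpose_block]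
  exact congrArg (reindex _ _) (blockDiagonal_neg _)

theorem Jmat_mul_self (k : ℕ) : Jmat k * Jmat k = -1 := by
  have block_mul_self :
      (!![0, 1; -1, 0] : Matrix (Fin 2) (Fin 2) ℝ) * !![0, 1; -1, 0] = -1 := by
    simp [← Matrix.ext_iff, Fin.forall_fin_two]
  calc
    Jmat k * Jmat k
    _ = reindex (twoBlockEquiv k) (twoBlockEquiv k)
          (blockDiagonal fun _ => !![0, 1; -1, 0] * !![0, 1; -1, 0]) := by
      simp only [Jmat_eq_reindex_blockDiagonal, reindex_apply, submatrix_mul_equiv,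
        blockDiagonal_mul]
    _ = reindex (twoBlockEquiv k) (twoBlockEquiv k) (-blockDiagonal 1) := by
      rw [block_mul_self, ← blockDiagonal_neg]
      rfl
    _ = -1 := by
      simp only [blockDiagonal_one, reindex_apply, submatrix_neg, Pi.neg_apply,
        submatrix_one_equiv]

/-- In `𝔰𝔬(2n+2m)` with the commutator bracket, let
`T = diag(0_{2n}, J_{2m})` and, for `M ∈ M_{2n×2m}(ℝ)`, let
`X(M) = [[0, M], [-Mᵀ, 0]]`.  Then `⁅T, X(M)⁆ = X(-M·J_{2m})`, hence
`⁅T, ⁅T, X(M)⁆⁆ = -X(M)`, and `⁅T, X(M)⁆ = 0` implies `M = 0`. -/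
theorem stmt10 (n m : ℕ) (hn : 1 ≤ n) (hm : 1 ≤ m)
    (T : Matrix (Fin (2 * n) ⊕ Fin (2 * m)) (Fin (2 * n) ⊕ Fin (2 * m)) ℝ)
    (hT : T = Matrix.fromBlocks 0 0 0 (Jmat m))
    (X : Matrix (Fin (2 * n)) (Fin (2 * m)) ℝ →
      Matrix (Fin (2 * n) ⊕ Fin (2 * m)) (Fin (2 * n) ⊕ Fin (2 * m)) ℝ)
    (hX : ∀ M, X M = Matrix.fromBlocks 0 M (-Mᵀ) 0) :
    ∀ M : Matrix (Fin (2 * n)) (Fin (2 * m)) ℝ,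
      ⁅T, X M⁆ = X (-(M * Jmat m)) ∧
      ⁅T, ⁅T, X M⁆⁆ = -(X M) ∧
      (⁅T, X M⁆ = 0 → M = 0) := by
  obtain rfl : X = skewOffDiag := funext hX
  exact hT ▸ stmt10_general (Jmat_transpose m) (Jmat_mul_self m)
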